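/- Fix an integer base g ≥ 2, a real ε > 0, and k ∈ ℕ, and let δ = δ(ε,k) > 0 be a constant such that for all sufficiently large m the number of integers in [1, m] that are not (ε,k)-normal to base g is at most m^{1−δ}. For a positive integer m, set m' = ⌊m^{1−δ/2}⌋, ℓ = ⌊(⌊log_g m²⌋ + 1)/2⌋, and let c(n, m) be the least nonnegative residue of n² modulo g^ℓ, regarded as a string of exactly ℓ base-g digits by padding with leading zeros. Then the number of integers n ∈ [m', m] for which the ℓ-digit string c(n, m) is not (ε,k)-normal is o(m) as m → ∞. -/

import Mathlib

open Filter Asymptotics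

/-- Number of (possibly overlapping) occurrences of the string `σ` as a contiguous
substring of the string `w` (strings are lists of base-`g` digits). -/
def nu (w σ : List ℕ) : ℕ :=
  ((Finset.range w.length).filter (fun i => σ <+: w.drop i)).card

/-- The string of base-`g` digits of `a`, most significant digit first. -/
def digs (g a : ℕ) : List ℕ :=
  (Nat.digits g a).reverse

/-- `L(a) = ⌊log_g a⌋ + 1`, the number of base-`g` digits of `a ≥ 1`. -/
def Lg (g a : ℕ) : ℕ :=
  Nat.log g a + 1

/-- A positive integer `a` is `(ε,k)`-normal to base `g` if every string `σ` of `k`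
base-`g` digits satisfies `|ν(a,σ)/L(a) − g^{−k}| ≤ ε`. -/
def EKNormalInt (g : ℕ) (ε : ℝ) (k : ℕ) (a : ℕ) : Prop :=
  ∀ σ : List ℕ, σ.length = k → (∀ d ∈ σ, d < g) →
    |(nu (digs g a) σ : ℝ) / (Lg g a : ℝ) - 1 / (g : ℝ) ^ k| ≤ ε

/-- A string `w` over `{0, …, g−1}` is `(ε,k)`-normal if every string `σ` of `k`
base-`g` digits satisfies `|ν(w,σ)/|w| − g^{−k}| ≤ ε`. -/
def EKNormalStr (g : ℕ) (ε : ℝ) (k : ℕ) (w : List ℕ) : Prop :=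
  ∀ σ : List ℕ, σ.length = k → (∀ d ∈ σ, d < g) →
    |(nu w σ : ℝ) / (w.length : ℝ) - 1 / (g : ℝ) ^ k| ≤ ε

/-- The base-`g` representation of `a` (most significant digit first), padded with
leading zeros so as to have exactly `ℓ` digits. -/
def paddedDigs (g ℓ a : ℕ) : List ℕ :=
  List.replicate (ℓ - (Nat.digits g a).length) 0 ++ (Nat.digits g a).reverse

/-!
Almost every `ℓ`-digit string is `(ε, k)`-normal: windows of `k` digits in disjoint positions are
independent, so the number of occurrences of a given word has variance `O(ℓ)`, and Chebyshev's
inequality bounds the proportion of exceptional strings by `O(1 / ℓ)`.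

Squaring modulo `N = g ^ ℓ` keeps such a set of exceptions negligible. The square of `x` has at
most `2 ^ ω(N) * gcd(2x, N)` square roots modulo `N`; here `ω(N) = ω(g)`, and `gcd(2x, N)` is at
most `2 * g ^ s` unless some prime factor `p` of `g` satisfies `p ^ s ∣ x`, which happens for a
proportion at most `ω(g) / 2 ^ s` of the residues. Finally `[0, m]` is covered by `g` periods of
length `g ^ ℓ`, and `g ^ ℓ ≤ g * m`.
-/

open Finset

/-! ### Sums over residues and second moments -/

theorem sum_range_mul_mod_mul_div {R : Type*} [NonUnitalNonAssocSemiring R] (M N : ℕ)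
    (f h : ℕ → R) :
    ∑ c ∈ range (M * N), f (c % M) * h (c / M) = (∑ a ∈ range M, f a) * ∑ b ∈ range N, h b := by
  induction N with
  | zero => simp
  | succ N ih =>
    rw [Nat.mul_succ, sum_range_add, ih, sum_range_succ, mul_add, sum_mul _ _ (h N)]
    congr 1
    refine sum_congr rfl fun a ha ↦ ?_
    have ha : a < M := mem_range.1 ha
    rw [Nat.mul_add_mod, Nat.mod_eq_of_lt ha, Nat.mul_add_div (by omega), Nat.div_eq_of_lt ha,
      add_zero]

theorem card_filter_mod_range_mul (M N : ℕ) (P : ℕ → Prop) [DecidablePred P] :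
    #{c ∈ range (M * N) | P (c % M)} = N * #{a ∈ range M | P a} := by
  have h := sum_range_mul_mod_mul_div M N (fun a ↦ if P a then 1 else 0) (fun _ ↦ 1)
  simpa only [mul_one, sum_boole, sum_const, card_range, smul_eq_mul, Nat.cast_id,
    mul_comm _ N] using h

theorem card_filter_mod_eq_range_mul {M v : ℕ} (N : ℕ) (hv : v < M) :
    #{c ∈ range (M * N) | c % M = v} = N := by
  rw [card_filter_mod_range_mul M N (· = v), filter_eq', if_pos (mem_range.2 hv), card_singleton,
    mul_one]

theorem card_filter_mod_Iic_le {M N m : ℕ} (hm : m < M * N) (P : ℕ → Prop) [DecidablePred P] :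
    #{n ∈ Iic m | P (n % M)} ≤ N * #{a ∈ range M | P a} := by
  have hsub : Iic m ⊆ range (M * N) := fun n hn ↦ mem_range.2 ((mem_Iic.1 hn).trans_lt hm)
  exact (card_le_card (filter_subset_filter _ hsub)).trans (card_filter_mod_range_mul M N P).le

theorem card_filter_le_abs_mul_sq_le {ι : Type*} (s : Finset ι) (f : ι → ℝ) {a : ℝ} (ha : 0 ≤ a) :
    #{c ∈ s | a ≤ |f c|} * a ^ 2 ≤ ∑ c ∈ s, f c ^ 2 :=
  calc #{c ∈ s | a ≤ |f c|} * a ^ 2 = #{c ∈ s | a ≤ |f c|} • a ^ 2 := (nsmul_eq_mul _ _).symm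
    _ ≤ ∑ c ∈ s with a ≤ |f c|, f c ^ 2 := card_nsmul_le_sum _ _ _ fun c hc ↦
      sq_abs (f c) ▸ pow_le_pow_left₀ ha (mem_filter.1 hc).2 2
    _ ≤ ∑ c ∈ s, f c ^ 2 :=
      sum_le_sum_of_subset_of_nonneg (filter_subset _ _) fun _ _ _ ↦ sq_nonneg _

theorem sum_sq_sum_range_le_of_orthogonal {ι : Type*} (s : Finset ι) (X : ℕ → ι → ℝ) (n k : ℕ)
    (hX : ∀ i, ∀ c ∈ s, |X i c| ≤ 1)
    (horth : ∀ i j, i + k ≤ j → j < n → ∑ c ∈ s, X i c * X j c = 0) :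
    ∑ c ∈ s, (∑ i ∈ range n, X i c) ^ 2 ≤ n * (2 * k) * #s := by
  have expand : ∑ c ∈ s, (∑ i ∈ range n, X i c) ^ 2 =
      ∑ i ∈ range n, ∑ j ∈ range n, ∑ c ∈ s, X i c * X j c := by
    simp_rw [sq, sum_mul_sum]
    rw [sum_comm]
    exact sum_congr rfl fun i _ ↦ sum_comm
  have correlation_le : ∀ i ∈ range n, ∀ j ∈ range n, ∑ c ∈ s, X i c * X j c ≤
      if j ∈ Ico (i + 1 - k) (i + k) then (#s : ℝ) else 0 := by
    intro i hi j hj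
    rw [mem_range] at hi hj
    split_ifs with near
    · have : ∀ c ∈ s, X i c * X j c ≤ 1 := fun c hc ↦ (le_abs_self _).trans <|
        abs_mul (X i c) (X j c) ▸ mul_le_one₀ (hX i c hc) (abs_nonneg _) (hX j c hc)
      simpa using sum_le_sum this
    · rw [mem_Ico] at near
      rcases le_or_gt (i + k) j with far | _
      · exact (horth i j far hj).le
      · simp_rw [mul_comm (X i _)]
        exact (horth j i (by omega) hi).le
  have row_le : ∀ i ∈ range n, ∑ j ∈ range n, ∑ c ∈ s, X i c * X j c ≤ 2 * k * #s := by
    intro i hi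
    have near_card : #{j ∈ range n | j ∈ Ico (i + 1 - k) (i + k)} ≤ 2 * k := by
      rw [filter_mem_eq_inter]
      refine (card_le_card inter_subset_right).trans ?_
      rw [Nat.card_Ico]
      omega
    refine (sum_le_sum (correlation_le i hi)).trans ?_
    rw [← sum_filter, sum_const, nsmul_eq_mul]
    gcongr
    exact_mod_cast near_card
  rw [expand]
  simpa [mul_assoc] using sum_le_sum row_le

/-! ### Fibres of squaring modulo `N` -/

theorem pow_sub_dvd_of_pow_dvd_mul {M : Type*} [CommMonoidWithZero M] [IsCancelMulZero M]
    {p a b : M} (hp : Prime p) {n t : ℕ} (hab : p ^ n ∣ a * b) (hb : ¬ p ^ (t + 1) ∣ b) :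
    p ^ (n - t) ∣ a := by
  rw [pow_dvd_iff_le_emultiplicity, emultiplicity_mul hp] at hab
  rw [← emultiplicity_lt_iff_not_dvd, Nat.cast_add_one, ENat.lt_natCast_add_one_iff] at hb
  rw [pow_dvd_iff_le_emultiplicity, ENat.natCast_sub, tsub_le_iff_right]
  exact hab.trans (by gcongr)

theorem pow_sub_dvd_sub_or_add {p x y : ℤ} (hp : Prime p) {n t : ℕ}
    (hxy : p ^ n ∣ (x - y) * (x + y)) (hx : ¬ p ^ (t + 1) ∣ 2 * x) :
    p ^ (n - t) ∣ x - y ∨ p ^ (n - t) ∣ x + y := by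
  by_cases hadd : p ^ (t + 1) ∣ x + y
  · refine .inr (pow_sub_dvd_of_pow_dvd_mul hp (mul_comm (x - y) _ ▸ hxy) fun hsub ↦ hx ?_)
    have : 2 * x = (x + y) + (x - y) := by ring
    exact this ▸ dvd_add hadd hsub
  · exact .inl (pow_sub_dvd_of_pow_dvd_mul hp hxy hadd)

theorem ordProj_dvd_sub_or_add_of_sq_modEq {N x y p : ℕ} (hN : N ≠ 0) (hp : p.Prime)
    (h : y ^ 2 ≡ x ^ 2 [MOD N]) :
    (p : ℤ) ^ (N / (2 * x).gcd N).factorization p ∣ x - y ∨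
      (p : ℤ) ^ (N / (2 * x).gcd N).factorization p ∣ x + y := by
  set d := (2 * x).gcd N
  have hdN : d ∣ N := Nat.gcd_dvd_right _ _
  have hd : d ≠ 0 := Nat.gcd_ne_zero_right hN
  rw [Nat.factorization_div hdN, Finsupp.coe_tsub, Pi.sub_apply]
  rcases le_or_gt (N.factorization p) (d.factorization p) with hle | hlt
  · simp [Nat.sub_eq_zero_of_le hle]
  refine pow_sub_dvd_sub_or_add (Nat.prime_iff_prime_int.1 hp) ?_ fun h2x ↦ ?_
  · have hNxy : (N : ℤ) ∣ (x - y) * (x + y) := by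
      simpa [sq_sub_sq, mul_comm] using h.dvd
    exact dvd_trans (by exact_mod_cast Nat.ordProj_dvd N p) hNxy
  · have hpN : p ^ (d.factorization p + 1) ∣ N := (hp.pow_dvd_iff_le_factorization hN).2 hlt
    exact Nat.pow_succ_factorization_not_dvd hd hp (Nat.dvd_gcd (by exact_mod_cast h2x) hpN)

theorem natCast_dvd_of_forall_ordProj_dvd {W : ℕ} (hW : W ≠ 0) {z : ℤ}
    (h : ∀ p : ℕ, p.Prime → (p : ℤ) ^ W.factorization p ∣ z) : (W : ℤ) ∣ z := by
  rw [Int.natCast_dvd, Nat.dvd_iff_prime_pow_dvd_dvd]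
  intro p j hp hj
  have hle : j ≤ W.factorization p := (hp.pow_dvd_iff_le_factorization hW).1 hj
  exact (pow_dvd_pow p hle).trans (Int.natCast_dvd.1 (by exact_mod_cast h p hp))

theorem modEq_of_sq_modEq_of_forall_ordProj_dvd_sub_iff {N x y z : ℕ} (hN : N ≠ 0)
    (hy : y ^ 2 ≡ x ^ 2 [MOD N]) (hz : z ^ 2 ≡ x ^ 2 [MOD N])
    (hyz : ∀ p ∈ N.primeFactors, (p : ℤ) ^ (N / (2 * x).gcd N).factorization p ∣ x - y ↔
      (p : ℤ) ^ (N / (2 * x).gcd N).factorization p ∣ x - z) :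
    y ≡ z [MOD N / (2 * x).gcd N] := by
  set W := N / (2 * x).gcd N
  have hWN : W ∣ N := Nat.div_dvd_of_dvd (Nat.gcd_dvd_right _ _)
  refine Nat.modEq_iff_dvd.2
    (natCast_dvd_of_forall_ordProj_dvd (ne_zero_of_dvd_ne_zero hN hWN) fun p hp ↦ ?_)
  by_cases hpN : p ∈ N.primeFactors
  · by_cases hplus : (p : ℤ) ^ W.factorization p ∣ x - y
    · simpa using dvd_sub hplus ((hyz p hpN).1 hplus)
    · have hy' := (ordProj_dvd_sub_or_add_of_sq_modEq hN hp hy).resolve_left hplus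
      have hz' := (ordProj_dvd_sub_or_add_of_sq_modEq hN hp hz).resolve_left
        (mt (hyz p hpN).2 hplus)
      simpa using dvd_sub hz' hy'
  · have hpW : ¬ p ∣ W := fun h ↦ hpN (Nat.mem_primeFactors.2 ⟨hp, h.trans hWN, hN⟩)
    simp [Nat.factorization_eq_zero_of_not_dvd hpW]

-- Modulo each prime power exactly dividing `N / gcd(2x, N)`, a square root of `x ^ 2` is `x` or
-- `-x`, and these signs determine the root modulo `N / gcd(2x, N)`.
theorem card_sq_modEq_le {N : ℕ} (hN : N ≠ 0) (x : ℕ) :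
    #{y ∈ range N | y ^ 2 ≡ x ^ 2 [MOD N]} ≤ 2 ^ #N.primeFactors * (2 * x).gcd N := by
  set d := (2 * x).gcd N
  set W := N / d
  have hWd : W * d = N := Nat.div_mul_cancel (Nat.gcd_dvd_right _ _)
  let plusPrimes (y : ℕ) : Finset ℕ :=
    {p ∈ N.primeFactors | (p : ℤ) ^ W.factorization p ∣ x - y}
  have card_le : #{y ∈ range N | y ^ 2 ≡ x ^ 2 [MOD N]} ≤
      #(N.primeFactors.powerset ×ˢ range d) := by
    refine card_le_card_of_injOn (fun y ↦ (plusPrimes y, y / W)) (fun y hy ↦ ?_)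
      fun y hy z hz hyz ↦ ?_
    · have hyN : y < W * d := hWd.symm ▸ mem_range.1 (mem_filter.1 hy).1
      exact mem_product.2
        ⟨mem_powerset.2 (filter_subset _ _), mem_range.2 (Nat.div_lt_of_lt_mul hyN)⟩
    · obtain ⟨hplus, hdiv⟩ := Prod.mk.inj hyz
      have hmod : y % W = z % W := modEq_of_sq_modEq_of_forall_ordProj_dvd_sub_iff hN
        (mem_filter.1 hy).2 (mem_filter.1 hz).2 fun p hp ↦ by
          simpa [plusPrimes, hp] using Finset.ext_iff.1 hplus p
      rw [← Nat.div_add_mod y W, ← Nat.div_add_mod z W, hdiv, hmod]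
  rwa [card_product, card_powerset, card_range] at card_le

theorem card_filter_sq_mod_le {N K : ℕ} (hN : N ≠ 0) {A : Finset ℕ} (hA : A ⊆ range N)
    (hgcd : ∀ x ∈ A, (2 * x).gcd N ≤ K) (P : ℕ → Prop) [DecidablePred P] :
    #{x ∈ A | P (x ^ 2 % N)} ≤ 2 ^ #N.primeFactors * K * #{c ∈ range N | P c} := by
  refine card_le_mul_card_image_of_maps_to (f := fun x ↦ x ^ 2 % N) (fun x hx ↦ ?_) _ fun c _ ↦ ?_
  · exact mem_filter.2 ⟨mem_range.2 (Nat.mod_lt _ hN.bot_lt), (mem_filter.1 hx).2⟩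
  rcases eq_empty_or_nonempty {x ∈ {x ∈ A | P (x ^ 2 % N)} | x ^ 2 % N = c} with hemp | ⟨x, hx⟩
  · simp [hemp]
  simp only [mem_filter] at hx
  calc #{y ∈ {y ∈ A | P (y ^ 2 % N)} | y ^ 2 % N = c}
      ≤ #{y ∈ range N | y ^ 2 ≡ x ^ 2 [MOD N]} := card_le_card fun y hy ↦ by
        simp only [mem_filter] at hy ⊢
        exact ⟨hA hy.1.1, hy.2.trans hx.2.symm⟩
    _ ≤ 2 ^ #N.primeFactors * (2 * x).gcd N := card_sq_modEq_le hN x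
    _ ≤ 2 ^ #N.primeFactors * K := by gcongr; exact hgcd x hx.1.1

theorem gcd_pow_dvd_pow_of_forall_not_pow_dvd {g s x : ℕ}
    (hx : ∀ p ∈ g.primeFactors, ¬ p ^ s ∣ x) (hg : g ≠ 0) (ℓ : ℕ) : x.gcd (g ^ ℓ) ∣ g ^ s := by
  rw [Nat.dvd_iff_prime_pow_dvd_dvd]
  intro p j hp hj
  rcases Nat.eq_zero_or_pos j with rfl | hj0
  · simp
  have hpg : p ∣ g := hp.dvd_of_dvd_pow <|
    (dvd_pow_self p hj0.ne').trans (hj.trans (Nat.gcd_dvd_right _ _))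
  have hjs : j ≤ s := by
    by_contra! hsj
    exact hx p (Nat.mem_primeFactors.2 ⟨hp, hpg, hg⟩)
      ((pow_dvd_pow p hsj.le).trans (hj.trans (Nat.gcd_dvd_left _ _)))
  exact (pow_dvd_pow p hjs).trans (pow_dvd_pow_of_dvd hpg s)

theorem card_exists_prime_pow_dvd_le {s ℓ : ℕ} (g : ℕ) (hs : s ≤ ℓ) :
    (#{x ∈ range (g ^ ℓ) | ∃ p ∈ g.primeFactors, p ^ s ∣ x} : ℝ)
      ≤ #g.primeFactors * ((g : ℝ) ^ ℓ / 2 ^ s) := by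
  have card_multiples_le : ∀ p ∈ g.primeFactors,
      (#{x ∈ range (g ^ ℓ) | p ^ s ∣ x} : ℝ) ≤ (g : ℝ) ^ ℓ / 2 ^ s := by
    intro p hp
    have hp2 : 2 ≤ p := (Nat.prime_of_mem_primeFactors hp).two_le
    obtain ⟨N, hN⟩ : p ^ s ∣ g ^ ℓ :=
      (pow_dvd_pow p hs).trans (pow_dvd_pow_of_dvd (Nat.dvd_of_mem_primeFactors hp) ℓ)
    have hcard : #{x ∈ range (g ^ ℓ) | p ^ s ∣ x} = N := by
      simp_rw [Nat.dvd_iff_mod_eq_zero, hN]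
      exact card_filter_mod_eq_range_mul N (by positivity)
    rw [hcard, le_div_iff₀ (by positivity)]
    calc (N : ℝ) * 2 ^ s ≤ N * p ^ s := by gcongr; exact_mod_cast hp2
      _ = (g : ℝ) ^ ℓ := by rw [mul_comm]; exact_mod_cast hN.symm
  have hunion : {x ∈ range (g ^ ℓ) | ∃ p ∈ g.primeFactors, p ^ s ∣ x} =
      g.primeFactors.biUnion fun p ↦ {x ∈ range (g ^ ℓ) | p ^ s ∣ x} := by
    ext x
    simp only [mem_filter, mem_biUnion]
    tauto
  calc (#{x ∈ range (g ^ ℓ) | ∃ p ∈ g.primeFactors, p ^ s ∣ x} : ℝ)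
      ≤ ∑ p ∈ g.primeFactors, (#{x ∈ range (g ^ ℓ) | p ^ s ∣ x} : ℝ) := by
        rw [hunion]; exact_mod_cast card_biUnion_le
    _ ≤ #g.primeFactors * ((g : ℝ) ^ ℓ / 2 ^ s) := by
        simpa using sum_le_sum card_multiples_le

theorem card_filter_sq_mod_pow_le {g s ℓ : ℕ} (hg : g ≠ 0) (hℓ : ℓ ≠ 0) (hs : s ≤ ℓ) (P : ℕ → Prop)
    [DecidablePred P] :
    (#{x ∈ range (g ^ ℓ) | P (x ^ 2 % g ^ ℓ)} : ℝ) ≤ #g.primeFactors * ((g : ℝ) ^ ℓ / 2 ^ s) +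
      2 ^ #g.primeFactors * (2 * g ^ s) * #{c ∈ range (g ^ ℓ) | P c} := by
  set A : Finset ℕ := {x ∈ range (g ^ ℓ) | ∀ p ∈ g.primeFactors, ¬ p ^ s ∣ x}
  have hA : ∀ x ∈ A, (2 * x).gcd (g ^ ℓ) ≤ 2 * g ^ s := fun x hx ↦
    calc (2 * x).gcd (g ^ ℓ) ≤ Nat.gcd 2 (g ^ ℓ) * x.gcd (g ^ ℓ) :=
          Nat.le_of_dvd (by positivity) (Nat.gcd_mul_left_dvd_mul_gcd _ _ _)
      _ ≤ 2 * g ^ s := Nat.mul_le_mul (Nat.gcd_le_left _ two_pos) <| Nat.le_of_dvd (by positivity)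
          (gcd_pow_dvd_pow_of_forall_not_pow_dvd (mem_filter.1 hx).2 hg ℓ)
  have hfibre := card_filter_sq_mod_le (pow_ne_zero ℓ hg) (filter_subset _ _) hA P
  rw [Nat.primeFactors_pow g hℓ] at hfibre
  have hcover : {x ∈ range (g ^ ℓ) | P (x ^ 2 % g ^ ℓ)} ⊆
      {x ∈ range (g ^ ℓ) | ∃ p ∈ g.primeFactors, p ^ s ∣ x} ∪ {x ∈ A | P (x ^ 2 % g ^ ℓ)} := by
    intro x hx
    simp only [A, mem_union, mem_filter] at hx ⊢
    by_cases h : ∃ p ∈ g.primeFactors, p ^ s ∣ x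
    · exact .inl ⟨hx.1, h⟩
    · push Not at h
      exact .inr ⟨⟨hx.1, h⟩, hx.2⟩
  calc (#{x ∈ range (g ^ ℓ) | P (x ^ 2 % g ^ ℓ)} : ℝ)
      ≤ #{x ∈ range (g ^ ℓ) | ∃ p ∈ g.primeFactors, p ^ s ∣ x} + #{x ∈ A | P (x ^ 2 % g ^ ℓ)} := by
        exact_mod_cast (card_le_card hcover).trans (card_union_le _ _)
    _ ≤ _ := add_le_add (card_exists_prime_pow_dvd_le g hs) (by exact_mod_cast hfibre)

theorem isLittleO_card_filter_sq_mod_pow {g : ℕ} (hg : g ≠ 0) (P : ℕ → ℕ → Prop)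
    [∀ ℓ, DecidablePred (P ℓ)]
    (hP : (fun ℓ ↦ (#{c ∈ range (g ^ ℓ) | P ℓ c} : ℝ)) =o[atTop] fun ℓ ↦ (g : ℝ) ^ ℓ) :
    (fun ℓ ↦ (#{x ∈ range (g ^ ℓ) | P ℓ (x ^ 2 % g ^ ℓ)} : ℝ)) =o[atTop]
      fun ℓ ↦ (g : ℝ) ^ ℓ := by
  refine isLittleO_iff.2 fun η hη ↦ ?_
  obtain ⟨s, hs⟩ : ∃ s : ℕ, #g.primeFactors * ((1 / 2 : ℝ) ^ s) < η / 2 := by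
    have htendsto : Tendsto (fun s : ℕ ↦ #g.primeFactors * ((1 / 2 : ℝ) ^ s)) atTop (nhds 0) := by
      simpa using (tendsto_pow_atTop_nhds_zero_of_lt_one (r := (1 / 2 : ℝ)) (by norm_num)
        (by norm_num)).const_mul (#g.primeFactors : ℝ)
    exact (htendsto.eventually_lt_const (by positivity)).exists
  set C : ℝ := 2 ^ #g.primeFactors * (2 * g ^ s)
  have hC : 0 < C := by positivity
  filter_upwards [hP.bound (show 0 < η / (2 * C) by positivity), eventually_ge_atTop s,
    eventually_ne_atTop 0] with ℓ hPℓ hsℓ hℓ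
  simp only [Real.norm_natCast, norm_pow] at hPℓ ⊢
  calc (#{x ∈ range (g ^ ℓ) | P ℓ (x ^ 2 % g ^ ℓ)} : ℝ)
      ≤ #g.primeFactors * ((g : ℝ) ^ ℓ / 2 ^ s) + C * #{c ∈ range (g ^ ℓ) | P ℓ c} :=
        card_filter_sq_mod_pow_le hg hℓ hsℓ (P ℓ)
    _ ≤ #g.primeFactors * ((g : ℝ) ^ ℓ / 2 ^ s) + C * (η / (2 * C) * g ^ ℓ) := by gcongr
    _ = (#g.primeFactors * (1 / 2) ^ s + η / 2) * g ^ ℓ := by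
        rw [one_div_pow]; field_simp
    _ ≤ η * g ^ ℓ := by gcongr; linarith

/-! ### Deviations of digit strings -/

theorem nu_le_card_filter_add_one (w σ : List ℕ) :
    nu w σ ≤ #{i ∈ range (w.length - σ.length) | σ <+: w.drop i} + 1 := by
  refine (card_le_card fun i hi ↦ ?_).trans (card_insert_le (w.length - σ.length) _)
  obtain ⟨hi, hσ⟩ := mem_filter.1 hi
  have hlen := hσ.length_le
  rw [List.length_drop] at hlen
  simp only [mem_range, mem_insert, mem_filter] at hi ⊢
  rcases eq_or_ne i (w.length - σ.length) with heq | hne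
  · exact .inl heq
  · exact .inr ⟨by omega, hσ⟩

theorem card_filter_le_nu (w σ : List ℕ) :
    #{i ∈ range (w.length - σ.length) | σ <+: w.drop i} ≤ nu w σ :=
  card_le_card (filter_subset_filter _ (range_mono (Nat.sub_le _ _)))

theorem prefix_drop_iff_ofDigits_div_mod_eq {g : ℕ} (hg : 1 < g) {w σ : List ℕ}
    (hw : ∀ d ∈ w, d < g) (hσ : ∀ d ∈ σ, d < g) {i : ℕ} (hi : i + σ.length ≤ w.length) :
    σ <+: w.drop i ↔ Nat.ofDigits g w.reverse / g ^ (w.length - σ.length - i) % g ^ σ.length =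
      Nat.ofDigits g σ.reverse := by
  have hwin : ∀ d ∈ ((w.drop i).take σ.length).reverse, d < g := fun d hd ↦
    hw d (List.mem_of_mem_drop (List.mem_of_mem_take (List.mem_reverse.1 hd)))
  have window_value : Nat.ofDigits g w.reverse / g ^ (w.length - σ.length - i) % g ^ σ.length =
      Nat.ofDigits g ((w.drop i).take σ.length).reverse := by
    have hw' : ∀ d ∈ w.reverse, d < g := fun d hd ↦ hw d (List.mem_reverse.1 hd)
    rw [Nat.ofDigits_div_pow_eq_ofDigits_drop _ (by omega) _ hw',
      Nat.ofDigits_mod_pow_eq_ofDigits_take _ (by omega) _ fun d hd ↦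
        hw' d (List.mem_of_mem_drop hd),
      List.drop_reverse, List.take_reverse, List.drop_take, List.length_take]
    congr 4 <;> omega
  rw [window_value, List.prefix_iff_eq_take]
  refine ⟨fun h ↦ by rw [← h], fun h ↦ List.reverse_injective ?_⟩
  refine (Nat.ofDigits_inj_of_len_eq hg ?_ hwin (fun d hd ↦ hσ d (List.mem_reverse.1 hd)) h).symm
  simp only [List.length_reverse, List.length_take, List.length_drop]
  omega

theorem length_paddedDigs {g ℓ c : ℕ} (hg : 1 < g) (hc : c < g ^ ℓ) :
    (paddedDigs g ℓ c).length = ℓ := by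
  have := (Nat.digits_length_le_iff (k := ℓ) hg c).2 hc
  simp only [paddedDigs, List.length_append, List.length_replicate, List.length_reverse]
  omega

theorem lt_of_mem_paddedDigs {g : ℕ} (hg : 1 < g) {ℓ c d : ℕ} (hd : d ∈ paddedDigs g ℓ c) :
    d < g := by
  simp only [paddedDigs, List.mem_append, List.mem_replicate, List.mem_reverse] at hd
  rcases hd with ⟨_, rfl⟩ | hd
  · omega
  · exact Nat.digits_lt_base hg hd

theorem ofDigits_reverse_paddedDigs (g ℓ c : ℕ) :
    Nat.ofDigits g (paddedDigs g ℓ c).reverse = c := by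
  simp [paddedDigs, Nat.ofDigits_append_replicate_zero, Nat.ofDigits_digits]

/-- The centred indicator of the event that the `k` base-`g` digits of `c` at the positions
`r, …, r + k - 1`, counted from the least significant one, spell the number `v`. -/
noncomputable def windowDeviation (g k v r c : ℕ) : ℝ :=
  (if c / g ^ r % g ^ k = v then 1 else 0) - 1 / (g : ℝ) ^ k

theorem abs_windowDeviation_le_one {g : ℕ} (hg : g ≠ 0) (k v r c : ℕ) :
    |windowDeviation g k v r c| ≤ 1 := by
  have hle : 1 / (g : ℝ) ^ k ≤ 1 := by
    rw [one_div]
    exact inv_le_one_of_one_le₀ (one_le_pow₀ (by exact_mod_cast Nat.one_le_iff_ne_zero.2 hg))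
  have hnonneg : 0 ≤ 1 / (g : ℝ) ^ k := by positivity
  rw [windowDeviation, abs_le]
  split_ifs <;> constructor <;> linarith

theorem windowDeviation_mod_pow (g v c : ℕ) {k r q : ℕ} (h : r + k ≤ q) :
    windowDeviation g k v r (c % g ^ q) = windowDeviation g k v r c := by
  obtain ⟨n, rfl⟩ := Nat.exists_eq_add_of_le h
  rw [windowDeviation, windowDeviation, add_assoc, pow_add, Nat.mod_mul_right_div_self, pow_add,
    Nat.mod_mul_right_mod]

theorem windowDeviation_div_pow (g k v c r : ℕ) :
    windowDeviation g k v 0 (c / g ^ r) = windowDeviation g k v r c := by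
  simp [windowDeviation]

theorem sum_windowDeviation_eq_zero {g : ℕ} (hg : g ≠ 0) {k v n : ℕ} (hv : v < g ^ k)
    (hk : k ≤ n) : ∑ c ∈ range (g ^ n), windowDeviation g k v 0 c = 0 := by
  obtain ⟨j, rfl⟩ := Nat.exists_eq_add_of_le hk
  simp only [windowDeviation, pow_zero, Nat.div_one]
  rw [sum_sub_distrib, sum_boole, sum_const, card_range, nsmul_eq_mul, pow_add,
    card_filter_mod_eq_range_mul _ hv]
  push_cast
  field_simp
  ring

-- The digits below position `q` and those from `q` on vary independently.
theorem sum_windowDeviation_mul_eq_zero {g : ℕ} (hg : g ≠ 0) {k v r q ℓ : ℕ} (hv : v < g ^ k)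
    (hrq : r + k ≤ q) (hqℓ : q + k ≤ ℓ) :
    ∑ c ∈ range (g ^ ℓ), windowDeviation g k v r c * windowDeviation g k v q c = 0 := by
  have hsplit : g ^ ℓ = g ^ q * g ^ (ℓ - q) := by rw [← pow_add]; congr 1; omega
  calc ∑ c ∈ range (g ^ ℓ), windowDeviation g k v r c * windowDeviation g k v q c
      = ∑ c ∈ range (g ^ q * g ^ (ℓ - q)),
          windowDeviation g k v r (c % g ^ q) * windowDeviation g k v 0 (c / g ^ q) := by
        simp only [windowDeviation_mod_pow g v _ hrq, windowDeviation_div_pow, hsplit]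
    _ = 0 := by
        rw [sum_range_mul_mod_mul_div, sum_windowDeviation_eq_zero hg hv (by omega), mul_zero]

/-- The total deviation of the word `v` over the windows of length `k` of the `ℓ`-digit string
of `c`. The window starting at position `i` from the left occupies the positions from
`ℓ - k - i` on from the right; the window `i = ℓ - k` is left out, so that there are exactly
`ℓ - k` of them even for `k = 0`. -/
noncomputable def totalDeviation (g k v ℓ c : ℕ) : ℝ :=
  ∑ i ∈ range (ℓ - k), windowDeviation g k v (ℓ - k - i) c

theorem sum_totalDeviation_sq_le {g : ℕ} (hg : g ≠ 0) {k v : ℕ} (hv : v < g ^ k) (ℓ : ℕ) :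
    ∑ c ∈ range (g ^ ℓ), totalDeviation g k v ℓ c ^ 2 ≤ ℓ * (2 * k) * (g : ℝ) ^ ℓ := by
  have horth : ∀ i j, i + k ≤ j → j < ℓ - k → ∑ c ∈ range (g ^ ℓ),
      windowDeviation g k v (ℓ - k - i) c * windowDeviation g k v (ℓ - k - j) c = 0 := by
    intro i j hij hj
    simp_rw [mul_comm (windowDeviation g k v (ℓ - k - i) _)]
    exact sum_windowDeviation_mul_eq_zero hg hv (by omega) (by omega)
  calc ∑ c ∈ range (g ^ ℓ), totalDeviation g k v ℓ c ^ 2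
      ≤ (ℓ - k : ℕ) * (2 * k) * #(range (g ^ ℓ)) :=
        sum_sq_sum_range_le_of_orthogonal _ _ _ _
          (fun _ _ _ ↦ abs_windowDeviation_le_one hg _ _ _ _) horth
    _ ≤ ℓ * (2 * k) * (g : ℝ) ^ ℓ := by
        rw [card_range, Nat.cast_pow]
        gcongr
        exact Nat.sub_le _ _

theorem totalDeviation_ofDigits_eq {g ℓ c : ℕ} (hg : 1 < g) (hc : c < g ^ ℓ) {σ : List ℕ}
    (hσ : ∀ d ∈ σ, d < g) (hℓ : σ.length ≤ ℓ) :
    totalDeviation g σ.length (Nat.ofDigits g σ.reverse) ℓ c =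
      #{i ∈ range (ℓ - σ.length) | σ <+: (paddedDigs g ℓ c).drop i} -
        (ℓ - σ.length) * (1 / (g : ℝ) ^ σ.length) := by
  have hlen := length_paddedDigs hg hc
  have hwindow : ∀ i ∈ range (ℓ - σ.length), c / g ^ (ℓ - σ.length - i) % g ^ σ.length =
      Nat.ofDigits g σ.reverse ↔ σ <+: (paddedDigs g ℓ c).drop i := by
    intro i hi
    rw [mem_range] at hi
    rw [prefix_drop_iff_ofDigits_div_mod_eq hg (fun d hd ↦ lt_of_mem_paddedDigs hg hd) hσ
      (by omega), ofDigits_reverse_paddedDigs, hlen]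
  simp only [totalDeviation, windowDeviation]
  rw [sum_sub_distrib, sum_boole, sum_const, card_range, nsmul_eq_mul, Nat.cast_sub hℓ,
    filter_congr hwindow]

theorem abs_nu_paddedDigs_sub_sub_totalDeviation_le {g ℓ c : ℕ} (hg : 1 < g) (hc : c < g ^ ℓ)
    {σ : List ℕ} (hσ : ∀ d ∈ σ, d < g) (hℓ : σ.length ≤ ℓ) :
    |nu (paddedDigs g ℓ c) σ - ℓ * (1 / (g : ℝ) ^ σ.length) -
      totalDeviation g σ.length (Nat.ofDigits g σ.reverse) ℓ c| ≤ σ.length + 1 := by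
  have hupper := nu_le_card_filter_add_one (paddedDigs g ℓ c) σ
  have hlower := card_filter_le_nu (paddedDigs g ℓ c) σ
  rw [length_paddedDigs hg hc, ← Nat.cast_le (α := ℝ)] at hupper hlower
  have hp : 1 / (g : ℝ) ^ σ.length ≤ 1 := by
    rw [one_div]
    exact inv_le_one_of_one_le₀ (one_le_pow₀ (by exact_mod_cast hg.le))
  have hnonneg : 0 ≤ σ.length * (1 / (g : ℝ) ^ σ.length) := by positivity
  have hle : σ.length * (1 / (g : ℝ) ^ σ.length) ≤ σ.length :=
    mul_le_of_le_one_right (by positivity) hp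
  rw [totalDeviation_ofDigits_eq hg hc hσ hℓ, abs_le]
  push_cast at hupper
  constructor <;> linarith

theorem exists_le_abs_totalDeviation_of_not_EKNormalStr {g ℓ c k : ℕ} {ε : ℝ} (hg : 1 < g)
    (hc : c < g ^ ℓ) (hℓ : 0 < ℓ) (hk : k ≤ ℓ) (h : ¬ EKNormalStr g ε k (paddedDigs g ℓ c)) :
    ∃ v < g ^ k, ε * ℓ - (k + 1) ≤ |totalDeviation g k v ℓ c| := by
  simp only [EKNormalStr, length_paddedDigs hg hc] at h
  push Not at h
  obtain ⟨σ, rfl, hσ, hdev⟩ := h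
  refine ⟨Nat.ofDigits g σ.reverse, ?_, ?_⟩
  · rw [← List.length_reverse (as := σ)]
    exact Nat.ofDigits_lt_base_pow_length hg fun d hd ↦ hσ d (List.mem_reverse.1 hd)
  have hℓ' : (0 : ℝ) < ℓ := Nat.cast_pos.2 hℓ
  have hcount : ε * ℓ < |nu (paddedDigs g ℓ c) σ - ℓ * (1 / (g : ℝ) ^ σ.length)| :=
    calc ε * ℓ < |nu (paddedDigs g ℓ c) σ / ℓ - 1 / (g : ℝ) ^ σ.length| * ℓ := by gcongr
      _ = _ := by rw [← abs_of_pos hℓ', ← abs_mul, abs_of_pos hℓ']; field_simp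
  have herror := abs_nu_paddedDigs_sub_sub_totalDeviation_le hg hc hσ hk
  linarith [abs_sub_abs_le_abs_sub ((nu (paddedDigs g ℓ c) σ : ℝ) - ℓ * (1 / (g : ℝ) ^ σ.length))
    (totalDeviation g σ.length (Nat.ofDigits g σ.reverse) ℓ c)]

theorem card_le_abs_totalDeviation_le {g : ℕ} (hg : g ≠ 0) {k v ℓ : ℕ} (hv : v < g ^ k)
    (hℓ : 0 < ℓ) {ε : ℝ} (hε : 0 < ε) :
    (#{c ∈ range (g ^ ℓ) | ε * ℓ ≤ |totalDeviation g k v ℓ c|} : ℝ)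
      ≤ 2 * k / ε ^ 2 * ((g : ℝ) ^ ℓ / ℓ) := by
  have hchebyshev := (card_filter_le_abs_mul_sq_le (range (g ^ ℓ)) (totalDeviation g k v ℓ)
    (by positivity : 0 ≤ ε * ℓ)).trans (sum_totalDeviation_sq_le hg hv ℓ)
  rw [← le_div_iff₀ (by positivity)] at hchebyshev
  refine hchebyshev.trans_eq ?_
  field_simp

open scoped Classical in
theorem card_not_EKNormalStr_le {g k ℓ : ℕ} {ε : ℝ} (hg : 1 < g) (hε : 0 < ε) (hℓ : 0 < ℓ)
    (hk : k ≤ ℓ) (hkε : (k : ℝ) + 1 ≤ ε / 2 * ℓ) :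
    (#{c ∈ range (g ^ ℓ) | ¬ EKNormalStr g ε k (paddedDigs g ℓ c)} : ℝ)
      ≤ (g : ℝ) ^ k * (2 * k / (ε / 2) ^ 2) * ((g : ℝ) ^ ℓ / ℓ) := by
  let deviating (v : ℕ) : Finset ℕ :=
    {c ∈ range (g ^ ℓ) | ε / 2 * ℓ ≤ |totalDeviation g k v ℓ c|}
  have hcover : {c ∈ range (g ^ ℓ) | ¬ EKNormalStr g ε k (paddedDigs g ℓ c)} ⊆
      (range (g ^ k)).biUnion deviating := by
    intro c hc
    obtain ⟨hc, hnormal⟩ := mem_filter.1 hc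
    obtain ⟨v, hv, hdev⟩ := exists_le_abs_totalDeviation_of_not_EKNormalStr hg
      (mem_range.1 hc) hℓ hk hnormal
    exact mem_biUnion.2 ⟨v, mem_range.2 hv, mem_filter.2 ⟨hc, by linarith⟩⟩
  calc (#{c ∈ range (g ^ ℓ) | ¬ EKNormalStr g ε k (paddedDigs g ℓ c)} : ℝ)
      ≤ ∑ v ∈ range (g ^ k), (#(deviating v) : ℝ) := by
        exact_mod_cast (card_le_card hcover).trans card_biUnion_le
    _ ≤ ∑ v ∈ range (g ^ k), 2 * k / (ε / 2) ^ 2 * ((g : ℝ) ^ ℓ / ℓ) := sum_le_sum fun v hv ↦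
        card_le_abs_totalDeviation_le (by omega) (mem_range.1 hv) hℓ (by positivity)
    _ = (g : ℝ) ^ k * (2 * k / (ε / 2) ^ 2) * ((g : ℝ) ^ ℓ / ℓ) := by
        rw [sum_const, card_range, nsmul_eq_mul, Nat.cast_pow, mul_assoc]

open scoped Classical in
theorem isLittleO_card_not_EKNormalStr {g : ℕ} (hg : 1 < g) {ε : ℝ} (hε : 0 < ε) (k : ℕ) :
    (fun ℓ ↦ (#{c ∈ range (g ^ ℓ) | ¬ EKNormalStr g ε k (paddedDigs g ℓ c)} : ℝ))
      =o[atTop] fun ℓ ↦ (g : ℝ) ^ ℓ := by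
  have hbigO : (fun ℓ ↦ (#{c ∈ range (g ^ ℓ) | ¬ EKNormalStr g ε k (paddedDigs g ℓ c)} : ℝ))
      =O[atTop] fun ℓ ↦ (g : ℝ) ^ ℓ / ℓ := by
    have hlarge : Tendsto (fun ℓ : ℕ ↦ ε / 2 * ℓ) atTop atTop :=
      tendsto_natCast_atTop_atTop.const_mul_atTop (by positivity)
    refine .of_bound (g ^ k * (2 * k / (ε / 2) ^ 2)) ?_
    filter_upwards [eventually_gt_atTop 0, eventually_ge_atTop k,
      hlarge.eventually_ge_atTop ((k : ℝ) + 1)] with ℓ hℓ hk hkε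
    simpa using card_not_EKNormalStr_le hg hε hℓ hk hkε
  refine hbigO.trans_isLittleO ?_
  simpa [div_eq_mul_inv] using (isBigO_refl (fun ℓ : ℕ ↦ (g : ℝ) ^ ℓ) atTop).mul_isLittleO
    ((isLittleO_one_iff ℝ).2 tendsto_inv_atTop_nhds_zero_nat)

/-! ### Squares up to `m` -/

/-- The number `ℓ = ⌊L(m²) / 2⌋` of digits in the second half of `m²`. -/
def halfLength (g m : ℕ) : ℕ :=
  Lg g (m ^ 2) / 2

theorem lt_pow_halfLength_add_one {g : ℕ} (hg : 1 < g) (m : ℕ) : m < g ^ (halfLength g m + 1) := by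
  refine lt_of_pow_lt_pow_left₀ 2 (by positivity) ?_
  calc m ^ 2 < g ^ Lg g (m ^ 2) := Nat.lt_pow_succ_log_self hg _
    _ ≤ g ^ ((halfLength g m + 1) * 2) := Nat.pow_le_pow_right (by omega) (by
        rw [halfLength]; omega)
    _ = (g ^ (halfLength g m + 1)) ^ 2 := pow_mul _ _ _

theorem pow_halfLength_le {g m : ℕ} (hg : g ≠ 0) (hm : m ≠ 0) : g ^ halfLength g m ≤ g * m := by
  refine le_of_pow_le_pow_left₀ two_ne_zero (by positivity) ?_
  calc (g ^ halfLength g m) ^ 2 = g ^ (halfLength g m * 2) := (pow_mul _ _ _).symm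
    _ ≤ g ^ (Nat.log g (m ^ 2) + 1) := Nat.pow_le_pow_right (by omega) (Nat.div_mul_le_self _ _)
    _ = g * g ^ Nat.log g (m ^ 2) := pow_succ' _ _
    _ ≤ g ^ 2 * m ^ 2 := Nat.mul_le_mul (Nat.le_self_pow two_ne_zero g)
        (Nat.pow_log_le_self g (by positivity))
    _ = (g * m) ^ 2 := (mul_pow _ _ _).symm

theorem tendsto_halfLength_atTop {g : ℕ} (hg : 1 < g) : Tendsto (halfLength g) atTop atTop := by
  refine tendsto_atTop.2 fun b ↦ ?_
  filter_upwards [eventually_ge_atTop (g ^ b)] with m hm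
  exact Nat.lt_succ_iff.1 ((Nat.pow_lt_pow_iff_right hg).1
    (hm.trans_lt (lt_pow_halfLength_add_one hg m)))

open scoped Classical in
theorem second_half_of_squares_normal_general (g : ℕ) (hg : 2 ≤ g) (ε : ℝ) (hε : 0 < ε) (k : ℕ) :
    (fun m : ℕ ↦ (#{n ∈ Iic m | ¬ EKNormalStr g ε k
        (paddedDigs g (halfLength g m) (n ^ 2 % g ^ halfLength g m))} : ℝ))
      =o[atTop] fun m : ℕ ↦ (m : ℝ) := by
  let badSquare (ℓ n : ℕ) : Prop := ¬ EKNormalStr g ε k (paddedDigs g ℓ (n ^ 2 % g ^ ℓ))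
  have hresidues : (fun ℓ ↦ (#{n ∈ range (g ^ ℓ) | badSquare ℓ n} : ℝ))
      =o[atTop] fun ℓ ↦ (g : ℝ) ^ ℓ :=
    isLittleO_card_filter_sq_mod_pow (by omega) _ (isLittleO_card_not_EKNormalStr hg hε k)
  have hmodulus : (fun m ↦ (g : ℝ) ^ halfLength g m) =O[atTop] fun m : ℕ ↦ (m : ℝ) := by
    refine .of_bound g ?_
    filter_upwards [eventually_ne_atTop 0] with m hm
    simp only [norm_pow, Real.norm_natCast]
    exact_mod_cast pow_halfLength_le (by omega) hm
  have hcount : (fun m : ℕ ↦ (#{n ∈ Iic m | badSquare (halfLength g m) n} : ℝ)) =O[atTop]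
      fun m ↦ (#{n ∈ range (g ^ halfLength g m) | badSquare (halfLength g m) n} : ℝ) := by
    refine .of_bound g (.of_forall fun m ↦ ?_)
    have hle := card_filter_mod_Iic_le (pow_succ g _ ▸ lt_pow_halfLength_add_one hg m)
      (badSquare (halfLength g m))
    simp only [badSquare, ← Nat.pow_mod] at hle
    simp only [Real.norm_natCast]
    exact_mod_cast hle
  exact hcount.trans_isLittleO
    ((hresidues.comp_tendsto (tendsto_halfLength_atTop hg)).trans_isBigO hmodulus)

open scoped Classical in
/-- The second half `c(n,m) = n² mod g^ℓ` of the digits of `n²`, regarded as an `ℓ`-digit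
string by padding with leading zeros (for `n ∈ [m', m]`, where `m' = ⌊m^{1−δ/2}⌋` and
`ℓ = ⌊L(m²)/2⌋`), is `(ε,k)`-normal with `o(m)` exceptions. -/
theorem second_half_of_squares_normal (g : ℕ) (hg : 2 ≤ g) (ε : ℝ) (hε : 0 < ε) (k : ℕ)
    (δ : ℝ) (hδ : 0 < δ)
    (hCE : ∀ᶠ m : ℕ in atTop,
      (((Finset.Icc 1 m).filter fun a => ¬ EKNormalInt g ε k a).card : ℝ)
        ≤ (m : ℝ) ^ (1 - δ)) :
    (fun m : ℕ =>
        (((Finset.Icc ⌊(m : ℝ) ^ (1 - δ / 2)⌋₊ m).filter fun n =>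
            ¬ EKNormalStr g ε k
              (paddedDigs g ((Nat.log g (m ^ 2) + 1) / 2)
                (n ^ 2 % g ^ ((Nat.log g (m ^ 2) + 1) / 2)))).card : ℝ))
      =o[atTop] fun m : ℕ => (m : ℝ) := by
  refine IsBigO.trans_isLittleO (.of_norm_le fun m ↦ (Real.norm_natCast _).trans_le ?_)
    (second_half_of_squares_normal_general g hg ε hε k)
  exact Nat.cast_le.2 (card_le_card (filter_subset_filter _ Icc_subset_Iic_self))
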